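/- Let X be an n×p matrix whose rows are i.i.d. N(0, Σ), partitioned as columns X_S and X_{S^c} for S ⊆ {1,…,p}, and let ε̃ = X_{S^c}β_{S^c} + ε with ε ~ N(0, σ²I_n) independent of X. Then for each j ∈ S^c, the conditional distribution of X_j given (X_S, ε̃) equals X_S a_j + b_j W + Z_j, where a_j = Σ_{SS}^{-1}Σ_{Sj}, b_j = e_jᵀ Σ_{S^c|S} β_{S^c} / √d with d = σ² + β_{S^c}ᵀΣ_{S^c|S}β_{S^c}, W ~ N(0, I_n) depends only on (X_S, ε̃), and Z_j ~ N(0, σ̃_{jj} I_n) is independent of (X_S, ε̃) with σ̃_{jj} = Σ_{jj} − a_jᵀΣ_{SS}a_j − b_j² ≤ Σ_{jj}. -/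

import Mathlib

open MeasureTheory ProbabilityTheory Matrix

/-- Coefficients (in the family `V`) of a row-`i` linear combination. -/
def gcdCoef {n p : ℕ} (i : Fin n) (v : Fin p → ℝ) (t : ℝ) : (Fin n × Fin p) ⊕ Fin n → ℝ :=
  Sum.elim (fun q => if q.1 = i then v q.2 else 0) (fun k => if k = i then t else 0)

lemma gcdCoef_dot {n p : ℕ} (i i' : Fin n) (v v' : Fin p → ℝ) (t t' : ℝ) :
    ∑ q, gcdCoef i v t q * gcdCoef i' v' t' q = if i = i' then v ⬝ᵥ v' + t * t' else 0 := by
  rw [Fintype.sum_sum_type, Fintype.sum_prod_type]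
  simp only [gcdCoef, Sum.elim_inl, Sum.elim_inr]
  split_ifs with h
  · subst h
    congr 1
    · rw [Finset.sum_eq_single i]
      · simp [dotProduct]
      · intro b _ hb; simp [hb]
      · simp
    · simp
  · have h' : ¬ i' = i := fun e => h e.symm
    simp [h']

lemma gcdCoef_sum {n p : ℕ} (i : Fin n) (v : Fin p → ℝ) (t : ℝ)
    (x : (Fin n × Fin p) ⊕ Fin n → ℝ) :
    ∑ q, gcdCoef i v t q * x q = ∑ l, x (Sum.inl (i, l)) * v l + t * x (Sum.inr i) := by
  rw [Fintype.sum_sum_type, Fintype.sum_prod_type]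
  simp only [gcdCoef, Sum.elim_inl, Sum.elim_inr]
  congr 1
  · rw [Finset.sum_eq_single i]
    · simp [mul_comm]
    · intro b _ hb; simp [hb]
    · simp
  · simp

section
variable {Ω : Type*} [MeasurableSpace Ω] {μ : Measure Ω} [IsProbabilityMeasure μ]
  {I : Type*} [Fintype I] {V : I → Ω → ℝ}

lemma gcd_aem (hlaw : Measure.map (fun ω => fun q => V q ω) μ =
      Measure.pi fun _ : I => gaussianReal 0 1) :
    AEMeasurable (fun ω => fun q => V q ω) μ :=
  AEMeasurable.of_map_ne_zero (by rw [hlaw]; exact IsProbabilityMeasure.ne_zero _)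

lemma gcd_ind (hlaw : Measure.map (fun ω => fun q => V q ω) μ =
      Measure.pi fun _ : I => gaussianReal 0 1) (q : I) :
    Measure.map (V q) μ = gaussianReal 0 1 := by
  have : V q = (fun x : I → ℝ => x q) ∘ (fun ω => fun q => V q ω) := rfl
  rw [this, ← AEMeasurable.map_map_of_aemeasurable (measurable_pi_apply q).aemeasurable
    (gcd_aem hlaw), hlaw]
  exact (measurePreserving_eval (fun _ : I => gaussianReal 0 1) q).map_eq

lemma gcd_iIndep (hlaw : Measure.map (fun ω => fun q => V q ω) μ =
      Measure.pi fun _ : I => gaussianReal 0 1) : iIndepFun V μ := by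
  rw [iIndepFun_iff_map_fun_eq_pi_map (fun q => aemeasurable_pi_iff.1 (gcd_aem hlaw) q), hlaw]
  simp [gcd_ind hlaw]

lemma gcd_gauss (hlaw : Measure.map (fun ω => fun q => V q ω) μ =
      Measure.pi fun _ : I => gaussianReal 0 1) :
    HasGaussianLaw (fun ω => fun q => V q ω) μ :=
  (gcd_iIndep hlaw).hasGaussianLaw fun q =>
    ⟨by rw [gcd_ind hlaw]; infer_instance⟩

lemma gcd_cov (hlaw : Measure.map (fun ω => fun q => V q ω) μ =
      Measure.pi fun _ : I => gaussianReal 0 1) (c c' : I → ℝ) :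
    cov[fun ω => ∑ q, c q * V q ω, fun ω => ∑ q, c' q * V q ω; μ] = ∑ q, c q * c' q := by
  classical
  have h := gcd_gauss hlaw
  have hm := gcd_ind hlaw
  have hL : ∀ q, MemLp (V q) 2 μ := fun q => (h.eval q).memLp_two
  have hind : iIndepFun V μ := gcd_iIndep hlaw
  have hc : ∀ q q', cov[V q, V q'; μ] = if q = q' then 1 else 0 := by
    intro q q'
    split_ifs with e
    · subst e
      rw [covariance_self (h.eval q).aemeasurable]
      have : Var[id; μ.map (V q)] = 1 := by rw [hm]; simp
      rw [variance_map (by fun_prop) (h.eval q).aemeasurable] at this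
      simpa using this
    · exact (hind.indepFun e).covariance_eq_zero (hL q) (hL q')
  rw [covariance_fun_sum_fun_sum (fun q => (hL q).const_mul _) (fun q => (hL q).const_mul _)]
  simp [covariance_const_mul_left, covariance_const_mul_right, hc]
  exact Finset.sum_congr rfl fun q _ => mul_comm _ _

lemma gcd_mean (hlaw : Measure.map (fun ω => fun q => V q ω) μ =
      Measure.pi fun _ : I => gaussianReal 0 1) (c : I → ℝ) :
    ∫ ω, ∑ q, c q * V q ω ∂μ = 0 := by
  have h := gcd_gauss hlaw
  have hm := gcd_ind hlaw
  rw [integral_finsetSum _ (fun q _ => ((h.eval q).integrable).const_mul _)]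
  refine Finset.sum_eq_zero fun q _ => ?_
  rw [integral_const_mul]
  have : ∫ x, x ∂(μ.map (V q)) = 0 := by rw [hm]; simp
  rw [integral_map (h.eval q).aemeasurable (by fun_prop)] at this
  rw [this, mul_zero]

lemma gcd_joint (hlaw : Measure.map (fun ω => fun q => V q ω) μ =
      Measure.pi fun _ : I => gaussianReal 0 1) {κ : Type*} [Fintype κ] (c : κ → I → ℝ) :
    HasGaussianLaw (fun ω => fun k => ∑ q, c k q * V q ω) μ := by
  have h := gcd_gauss hlaw
  exact h.map (LinearMap.toContinuousLinearMap (Matrix.mulVecLin (Matrix.of c)))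

lemma gcd_law (hlaw : Measure.map (fun ω => fun q => V q ω) μ =
      Measure.pi fun _ : I => gaussianReal 0 1) {κ : Type*} [Fintype κ] (c : κ → I → ℝ) (s : ℝ)
    (h0 : ∀ k k', k ≠ k' → ∑ q, c k q * c k' q = 0) (h1 : ∀ k, ∑ q, c k q * c k q = s) :
    Measure.map (fun ω => fun k => ∑ q, c k q * V q ω) μ =
      Measure.pi fun _ : κ => gaussianReal 0 (Real.toNNReal s) := by
  have hg := gcd_joint hlaw c
  have hi : iIndepFun (fun k ω => ∑ q, c k q * V q ω) μ :=
    hg.iIndepFun_of_covariance_eq_zero fun k k' hk => by rw [gcd_cov hlaw]; exact h0 k k' hk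
  rw [(iIndepFun_iff_map_fun_eq_pi_map (fun k => (hg.eval k).aemeasurable)).1 hi]
  congr 1
  ext1 k
  rw [(hg.eval k).map_eq_gaussianReal, gcd_mean hlaw, ← covariance_self (hg.eval k).aemeasurable,
    gcd_cov hlaw, h1]

lemma gcd_indep (hlaw : Measure.map (fun ω => fun q => V q ω) μ =
      Measure.pi fun _ : I => gaussianReal 0 1) {κ κ' : Type*} [Fintype κ] [Fintype κ']
    (c : κ → I → ℝ) (c' : κ' → I → ℝ)
    (h0 : ∀ k k', ∑ q, c k q * c' k' q = 0) :
    IndepFun (fun ω => fun k => ∑ q, c k q * V q ω) (fun ω => fun k => ∑ q, c' k q * V q ω) μ := by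
  have h := gcd_gauss hlaw
  refine HasGaussianLaw.indepFun_of_covariance_eval ?_ fun k k' => by
    rw [gcd_cov hlaw]; exact h0 k k'
  exact h.map (ContinuousLinearMap.prod
    (LinearMap.toContinuousLinearMap (Matrix.mulVecLin (Matrix.of c)))
    (LinearMap.toContinuousLinearMap (Matrix.mulVecLin (Matrix.of c'))))
end

lemma gcd_split {p : ℕ} (S : Finset (Fin p)) (f : Fin p → ℝ) (a : ↥S → ℝ) (b : Fin p → ℝ) :
    ∑ k, f k * (if h : k ∈ S then a ⟨k, h⟩ else b k) =
      ∑ l : ↥S, f l * a l + ∑ l ∈ Sᶜ, f l * b l := by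
  rw [← Finset.sum_add_sum_compl S]
  congr 1
  · rw [← Finset.sum_coe_sort S]
    exact Finset.sum_congr rfl fun l _ => by simp
  · exact Finset.sum_congr rfl fun l hl => by simp [Finset.mem_compl.1 hl]

/-- Gaussian conditional-distribution decomposition: let `X = U B` be an `n × p`
Gaussian design (rows i.i.d. `N(0, Σ)` with `Σ = BᵀB`), `ε ~ N(0, σ² I_n)` independent
of `X` (all built from a family `V` of i.i.d. standard Gaussians), and
`ε̃ = X_{Sᶜ} β_{Sᶜ} + ε`. Then for `j ∉ S` there exist `W, Z` with
`X_j = X_S a_j + b_j W + Z` where `a_j = Σ_{SS}⁻¹ Σ_{Sj}`,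
`b_j = e_jᵀ Σ_{Sᶜ|S} β_{Sᶜ}/√d`, `d = σ² + β_{Sᶜ}ᵀ Σ_{Sᶜ|S} β_{Sᶜ}`; `W ~ N(0, I_n)` is
a measurable function of `(X_S, ε̃)`, and `Z ~ N(0, σ̃_jj I_n)` is independent of
`(X_S, ε̃)`, with `σ̃_jj = Σ_jj − a_jᵀ Σ_{SS} a_j − b_j² ≤ Σ_jj`. -/
theorem gaussian_conditional_decomposition {Ω : Type*} [MeasurableSpace Ω]
    (μ : Measure Ω) [IsProbabilityMeasure μ] {n p : ℕ}
    (V : (Fin n × Fin p) ⊕ Fin n → Ω → ℝ)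
    (hlaw : Measure.map (fun ω => fun q => V q ω) μ =
      Measure.pi fun _ : (Fin n × Fin p) ⊕ Fin n => gaussianReal 0 1)
    (Sig B : Matrix (Fin p) (Fin p) ℝ) (hpd : Sig.PosDef) (hB : Bᵀ * B = Sig)
    (σ : ℝ) (hσ : 0 < σ) (β : Fin p → ℝ)
    (S : Finset (Fin p)) (j : Fin p) (hj : j ∉ S)
    (X : Ω → Matrix (Fin n) (Fin p) ℝ)
    (hX : ∀ ω, X ω = (Matrix.of fun i l => V (Sum.inl (i, l)) ω) * B)
    (epst : Fin n → Ω → ℝ)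
    (hepst : ∀ i ω, epst i ω = (∑ j' ∈ Sᶜ, X ω i j' * β j') + σ * V (Sum.inr i) ω)
    (Ass : Matrix ↥S ↥S ℝ)
    (hAss : Ass = Sig.submatrix (fun i : ↥S => (i : Fin p)) (fun i : ↥S => (i : Fin p)))
    (N : Matrix ↥(Sᶜ : Finset (Fin p)) ↥(Sᶜ : Finset (Fin p)) ℝ)
    (hN : N = Sig.submatrix (fun i : ↥(Sᶜ : Finset (Fin p)) => (i : Fin p))
            (fun l : ↥(Sᶜ : Finset (Fin p)) => (l : Fin p)) -
          Sig.submatrix (fun i : ↥(Sᶜ : Finset (Fin p)) => (i : Fin p))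
            (fun l : ↥S => (l : Fin p)) * Ass⁻¹ *
          Sig.submatrix (fun i : ↥S => (i : Fin p))
            (fun l : ↥(Sᶜ : Finset (Fin p)) => (l : Fin p)))
    (βSc : ↥(Sᶜ : Finset (Fin p)) → ℝ) (hβSc : ∀ l, βSc l = β (l : Fin p))
    (aj : ↥S → ℝ) (haj : aj = Ass⁻¹.mulVec fun i : ↥S => Sig (i : Fin p) j)
    (d : ℝ) (hd : d = σ ^ 2 + βSc ⬝ᵥ N.mulVec βSc)
    (bj : ℝ) (hbj : bj = (N.mulVec βSc) ⟨j, Finset.mem_compl.mpr hj⟩ / Real.sqrt d)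
    (sigtjj : ℝ) (hsigtjj : sigtjj = Sig j j - aj ⬝ᵥ Ass.mulVec aj - bj ^ 2) :
    ∃ W Z : Fin n → Ω → ℝ,
      (∀ i ω, X ω i j = (∑ l : ↥S, X ω i (l : Fin p) * aj l) + bj * W i ω + Z i ω) ∧
      sigtjj ≤ Sig j j ∧
      Measure.map (fun ω => fun i => W i ω) μ =
        (Measure.pi fun _ : Fin n => gaussianReal 0 1) ∧
      Measure.map (fun ω => fun i => Z i ω) μ =
        (Measure.pi fun _ : Fin n => gaussianReal 0 (Real.toNNReal sigtjj)) ∧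
      (∃ f : ((Fin n → ↥S → ℝ) × (Fin n → ℝ)) → (Fin n → ℝ), Measurable f ∧
        ∀ ω, (fun i => W i ω) =
          f (fun i (l : ↥S) => X ω i (l : Fin p), fun i => epst i ω)) ∧
      IndepFun (fun ω => fun i => Z i ω)
        (fun ω => ((fun i (l : ↥S) => X ω i (l : Fin p)), fun i => epst i ω)) μ := by
  classical
  -- symmetry and positivity
  have hsym : ∀ k l, Sig k l = Sig l k := fun k l => by
    have := hpd.isHermitian.apply k l
    simpa using this.symm
  have hpsd : ∀ u : Fin p → ℝ, 0 ≤ u ⬝ᵥ Sig *ᵥ u := fun u => by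
    have := hpd.posSemidef.dotProduct_mulVec_nonneg u
    simpa using this
  have hApd : Ass.PosDef := by
    rw [hAss]; exact hpd.submatrix Subtype.val_injective
  have hAdet : IsUnit Ass.det := (Matrix.isUnit_iff_isUnit_det _).1 hApd.isUnit
  have hAmul : Ass * Ass⁻¹ = 1 := Matrix.mul_nonsing_inv _ hAdet
  have hAA : ∀ k l, Ass k l = Sig k l := fun k l => by rw [hAss]; rfl
  -- the two regression coefficient vectors
  set hvec : ↥S → ℝ := fun i => ∑ l ∈ Sᶜ, Sig i l * β l with hhvec
  set g : ↥S → ℝ := Ass⁻¹ *ᵥ hvec with hg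
  have hAg : Ass *ᵥ g = hvec := by rw [hg, Matrix.mulVec_mulVec, hAmul, Matrix.one_mulVec]
  have hAa : Ass *ᵥ aj = fun i : ↥S => Sig i j := by
    rw [haj, Matrix.mulVec_mulVec, hAmul, Matrix.one_mulVec]
  have hAg' : ∀ k : ↥S, ∑ l : ↥S, Sig k l * g l = ∑ l ∈ Sᶜ, Sig k l * β l := fun k => by
    have := congrFun hAg k
    simpa [Matrix.mulVec, dotProduct, hAA, hhvec] using this
  have hAa' : ∀ k : ↥S, ∑ l : ↥S, Sig k l * aj l = Sig k j := fun k => by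
    have := congrFun hAa k
    simpa [Matrix.mulVec, dotProduct, hAA] using this
  -- residual vectors
  set rb : Fin p → ℝ := fun k => if h : k ∈ S then (fun l => - g l) ⟨k, h⟩ else β k with hrb
  set rj : Fin p → ℝ := fun k => if h : k ∈ S then (fun l => - aj l) ⟨k, h⟩
    else (Pi.single j 1 : Fin p → ℝ) k with hrj
  have hsrb : ∀ f : Fin p → ℝ, f ⬝ᵥ rb = - (∑ l : ↥S, f l * g l) + ∑ l ∈ Sᶜ, f l * β l := by
    intro f
    have := gcd_split S f (fun l => - g l) β
    rw [dotProduct, hrb, this]; simp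
  have hsrj : ∀ f : Fin p → ℝ, f ⬝ᵥ rj = - (∑ l : ↥S, f l * aj l) + f j := by
    intro f
    have := gcd_split S f (fun l => - aj l) (Pi.single j 1)
    rw [dotProduct, hrj, this]
    simp [Pi.single_apply, hj]
  have hSrb : ∀ k ∈ S, (Sig *ᵥ rb) k = 0 := fun k hk => by
    rw [Matrix.mulVec, hsrb, hAg' ⟨k, hk⟩]; simp
  have hSrj : ∀ k ∈ S, (Sig *ᵥ rj) k = 0 := fun k hk => by
    rw [Matrix.mulVec, hsrj, hAa' ⟨k, hk⟩]; simp
  have hNb : ∀ k : ↥(Sᶜ : Finset (Fin p)), (N *ᵥ βSc) k = (Sig *ᵥ rb) k := by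
    intro k
    have e1 : ∀ f : Fin p → ℝ, ∑ l : ↥(Sᶜ : Finset (Fin p)), f l * βSc l = ∑ l ∈ Sᶜ, f l * β l := by
      intro f
      rw [← Finset.sum_coe_sort Sᶜ]
      exact Finset.sum_congr rfl fun l _ => by rw [hβSc]
    have e2 : Sig.submatrix (fun i : ↥S => (i : Fin p))
            (fun l : ↥(Sᶜ : Finset (Fin p)) => (l : Fin p)) *ᵥ βSc = hvec := by
      ext i
      simpa [Matrix.mulVec, dotProduct] using e1 (fun l => Sig i l)
    have e3 := e1 (fun l => Sig k l)
    rw [hN, Matrix.sub_mulVec, ← Matrix.mulVec_mulVec, ← Matrix.mulVec_mulVec, e2, ← hg,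
      Matrix.mulVec, hsrb]
    simp only [Pi.sub_apply, Matrix.mulVec, dotProduct, Matrix.submatrix_apply]
    rw [e3]; ring
  have hQbb : rb ⬝ᵥ Sig *ᵥ rb = βSc ⬝ᵥ N *ᵥ βSc := by
    rw [dotProduct_comm, hsrb]
    have : ∑ l : ↥S, (Sig *ᵥ rb) l * g l = 0 :=
      Finset.sum_eq_zero fun l _ => by rw [hSrb _ l.2, zero_mul]
    rw [this, ← Finset.sum_coe_sort Sᶜ, dotProduct]
    simp [hNb, hβSc, mul_comm]
  have hQjb : rj ⬝ᵥ Sig *ᵥ rb = (N *ᵥ βSc) ⟨j, Finset.mem_compl.mpr hj⟩ := by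
    rw [dotProduct_comm, hsrj, hNb]
    have : ∑ l : ↥S, (Sig *ᵥ rb) l * aj l = 0 :=
      Finset.sum_eq_zero fun l _ => by rw [hSrb _ l.2, zero_mul]
    rw [this]; simp
  have hQjj : rj ⬝ᵥ Sig *ᵥ rj = Sig j j - aj ⬝ᵥ Ass *ᵥ aj := by
    rw [dotProduct_comm, hsrj]
    have : ∑ l : ↥S, (Sig *ᵥ rj) l * aj l = 0 :=
      Finset.sum_eq_zero fun l _ => by rw [hSrj _ l.2, zero_mul]
    rw [this, Matrix.mulVec, hsrj, hAa, dotProduct]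
    have : ∑ l : ↥S, Sig j l * aj l = ∑ l : ↥S, aj l * Sig l j :=
      Finset.sum_congr rfl fun l _ => by rw [hsym j l, mul_comm]
    rw [this]; ring
  have hdpos : 0 < d := by
    have := hpsd rb
    rw [hQbb] at this
    rw [hd]; positivity
  have hsd : 0 < Real.sqrt d := Real.sqrt_pos.2 hdpos
  have hsd2 : Real.sqrt d * Real.sqrt d = d := Real.mul_self_sqrt hdpos.le
  set sd := Real.sqrt d with hsdd
  have hBQ : ∀ u v : Fin p → ℝ, (B *ᵥ u) ⬝ᵥ (B *ᵥ v) = u ⬝ᵥ Sig *ᵥ v := fun u v => by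
    rw [← hB, ← Matrix.mulVec_mulVec, Matrix.dotProduct_mulVec u, Matrix.vecMul_transpose]
  have hQsym : ∀ u v : Fin p → ℝ, u ⬝ᵥ Sig *ᵥ v = v ⬝ᵥ Sig *ᵥ u := fun u v => by
    rw [← hBQ, ← hBQ, dotProduct_comm]
  -- linear functionals of the rows
  have hrow : ∀ (i : Fin n) (u : Fin p → ℝ) (t : ℝ) (ω : Ω),
      ∑ q, gcdCoef i (B *ᵥ u) t q * V q ω = X ω i ⬝ᵥ u + t * V (Sum.inr i) ω := by
    intro i u t ω
    rw [gcdCoef_sum i (B *ᵥ u) t (fun q => V q ω), hX]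
    congr 1
    have : ((Matrix.of fun i l => V (Sum.inl (i, l)) ω) *ᵥ (B *ᵥ u)) i =
      (((Matrix.of fun i l => V (Sum.inl (i, l)) ω) * B) *ᵥ u) i := by
      rw [Matrix.mulVec_mulVec]
    exact this
  -- coefficients
  set zu : Fin p → ℝ := rj - (bj / sd) • rb with hzu
  have hbj' : rj ⬝ᵥ Sig *ᵥ rb = bj * sd := by
    rw [hQjb, hbj]; field_simp
  have hdb : rb ⬝ᵥ Sig *ᵥ rb = d - σ ^ 2 := by rw [hQbb, hd]; ring
  have hSz : ∀ k ∈ S, (Sig *ᵥ zu) k = 0 := fun k hk => by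
    rw [hzu, Matrix.mulVec_sub, Matrix.mulVec_smul]
    simp [hSrb k hk, hSrj k hk]
  set eu : Fin p → ℝ := fun k => if h : k ∈ S then (fun _ => (0 : ℝ)) (⟨k, h⟩ : ↥S) else β k with heu
  have hseu : ∀ f : Fin p → ℝ, f ⬝ᵥ eu = ∑ l ∈ Sᶜ, f l * β l := by
    intro f
    have := gcd_split S f (fun _ => 0) β
    rw [dotProduct, heu, this]; simp
  have hze : eu ⬝ᵥ Sig *ᵥ zu = rb ⬝ᵥ Sig *ᵥ zu := by
    rw [dotProduct_comm, hseu, dotProduct_comm, hsrb]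
    have : ∑ l : ↥S, (Sig *ᵥ zu) l * g l = 0 :=
      Finset.sum_eq_zero fun l _ => by rw [hSz _ l.2, zero_mul]
    rw [this]; simp
  have hzb : rb ⬝ᵥ Sig *ᵥ zu = bj / sd * σ ^ 2 := by
    rw [hzu, Matrix.mulVec_sub, Matrix.mulVec_smul, dotProduct_sub, dotProduct_smul, hQsym rb rj,
      hbj', hdb, ← hsd2, smul_eq_mul]
    field_simp; ring
  have hzj : rj ⬝ᵥ Sig *ᵥ zu = Sig j j - aj ⬝ᵥ Ass *ᵥ aj - bj ^ 2 := by
    rw [hzu, Matrix.mulVec_sub, Matrix.mulVec_smul, dotProduct_sub, dotProduct_smul,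
      hbj', hQjj, smul_eq_mul]
    field_simp
  have hzz : zu ⬝ᵥ Sig *ᵥ zu + (-(bj / sd * σ)) * (-(bj / sd * σ)) = sigtjj := by
    have : zu ⬝ᵥ Sig *ᵥ zu = rj ⬝ᵥ Sig *ᵥ zu - bj / sd * (rb ⬝ᵥ Sig *ᵥ zu) := by
      conv_lhs => rw [hzu]
      rw [sub_dotProduct, smul_dotProduct, smul_eq_mul]
    rw [this, hzb, hzj, hsigtjj]; ring
  have hww : ((1 / sd) • rb) ⬝ᵥ Sig *ᵥ ((1 / sd) • rb) + (σ / sd) * (σ / sd) = 1 := by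
    rw [Matrix.mulVec_smul, dotProduct_smul, smul_dotProduct, hdb, ← hsd2, smul_eq_mul,
      smul_eq_mul]
    field_simp; ring
  have hesum : ∀ i ω, epst i ω = X ω i ⬝ᵥ eu + σ * V (Sum.inr i) ω := fun i ω => by
    rw [hepst, hseu]
  have hWeq : ∀ i ω, X ω i ⬝ᵥ ((1 / sd) • rb) + σ / sd * V (Sum.inr i) ω =
      (epst i ω - ∑ l : ↥S, X ω i l * g l) / sd := fun i ω => by
    rw [dotProduct_smul, hsrb, hepst, smul_eq_mul]; ring
  let cw : Fin n → (Fin n × Fin p) ⊕ Fin n → ℝ := fun i => gcdCoef i (B *ᵥ ((1 / sd) • rb)) (σ / sd)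
  let cz : Fin n → (Fin n × Fin p) ⊕ Fin n → ℝ := fun i => gcdCoef i (B *ᵥ zu) (-(bj / sd * σ))
  let cy : Fin n × (↥S ⊕ Unit) → (Fin n × Fin p) ⊕ Fin n → ℝ := fun k =>
    gcdCoef k.1 (B *ᵥ (Sum.elim (fun l : ↥S => Pi.single (l : Fin p) 1) (fun _ => eu) k.2))
      (Sum.elim (fun _ => 0) (fun _ => σ) k.2)
  refine ⟨fun i ω => ∑ q, cw i q * V q ω, fun i ω => ∑ q, cz i q * V q ω, ?_, ?_, ?_, ?_, ?_, ?_⟩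
  · intro i ω
    simp only [cw, cz]
    rw [hrow, hrow, hzu, dotProduct_sub, dotProduct_smul, dotProduct_smul, hsrj]
    simp only [smul_eq_mul]
    ring
  · have h1 : 0 ≤ aj ⬝ᵥ Ass *ᵥ aj := by
      have := hApd.posSemidef.dotProduct_mulVec_nonneg aj
      simpa using this
    rw [hsigtjj]
    nlinarith [sq_nonneg bj]
  · have := gcd_law hlaw cw 1 (fun k k' hk => by simp only [cw]; rw [gcdCoef_dot, if_neg hk])
      (fun k => by simp only [cw]; rw [gcdCoef_dot, if_pos rfl, hBQ, hww])
    simpa using this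
  · exact gcd_law hlaw cz sigtjj (fun k k' hk => by simp only [cz]; rw [gcdCoef_dot, if_neg hk])
      (fun k => by simp only [cz]; rw [gcdCoef_dot, if_pos rfl, hBQ, hzz])
  · refine ⟨fun x i => (x.2 i - ∑ l : ↥S, x.1 i l * g l) / sd, by fun_prop, fun ω => ?_⟩
    ext i
    simp only [cw]
    rw [hrow, hWeq]
  · have h := gcd_indep hlaw cz cy (by
      rintro i ⟨i', l | u⟩ <;> simp only [cz, cy, Sum.elim_inl, Sum.elim_inr] <;>
        rw [gcdCoef_dot] <;> split_ifs with hi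
      · rw [hBQ, hQsym, single_dotProduct, hSz _ l.2]; simp
      · rfl
      · rw [hBQ, hQsym, hze, hzb]; ring
      · rfl)
    have h2 := h.comp (φ := id) (ψ := fun f : Fin n × (↥S ⊕ Unit) → ℝ =>
      ((fun i (l : ↥S) => f (i, Sum.inl l)), fun i => f (i, Sum.inr ()))) measurable_id
      (by fun_prop)
    have e : (fun ω => ((fun i (l : ↥S) => X ω i (l : Fin p)), fun i => epst i ω)) =
        (fun f : Fin n × (↥S ⊕ Unit) → ℝ =>
          ((fun i (l : ↥S) => f (i, Sum.inl l)), fun i => f (i, Sum.inr ()))) ∘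
        fun ω k => ∑ q, cy k q * V q ω := by
      funext ω
      refine Prod.ext ?_ ?_
      · funext i l
        have := hrow i (Pi.single (l : Fin p) 1) 0 ω
        rw [dotProduct_single] at this
        simp only [mul_one, zero_mul, add_zero] at this
        exact this.symm
      · funext i
        exact (hesum i ω).trans (hrow i eu σ ω).symm
    rw [e]
    exact h2
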